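/- Let r ≥ 1 and let i, j, k, l, m be integers with 1 ≤ i < j ≤ r, 0 ≤ l ≤ r-1, m ≥ 0, 1 ≤ k ≤ mr+l, k < j - i, and i ≤ l + j - r ≤ k + i - 1. Then in ℚ(x_1,…,x_r) one has X(i,k) · X(j, mr+l) = X(j, (m+1)r+k+i-j) · X(i, l+j-r-i) + X(j, (m+1)r+i-j-1) · X(l+j+1, k+r+i-l-j-1). -/

import Mathlib

/-- The ambient field `ℚ(x_1, …, x_r)`, realized as the fraction field of the
polynomial ring over `ℚ` in variables indexed by `ZMod r` (so indices are
automatically read modulo `r`). -/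
noncomputable abbrev CyclicField (r : ℕ) : Type :=
  FractionRing (MvPolynomial (ZMod r) ℚ)

/-- The variable `x_i` for `i : ℤ`, with `x_{i+r} = x_i`. -/
noncomputable def xv (r : ℕ) (i : ℤ) : CyclicField r :=
  algebraMap (MvPolynomial (ZMod r) ℚ) (CyclicField r) (MvPolynomial.X (i : ZMod r))

/-- The generalized cluster variable `X(l, n)` (the image of the indecomposable
nilpotent representation `E_l[n]` under the Caldero–Chapoton map):
`X(l,0) = 1` and, for `n ≥ 1`,
`X(l,n) = x_{l+n}/x_l + Σ_{k=1}^{n-1} (x_{l+n}·x_{l+r-1})/(x_{l+k-1}·x_{l+k}) + x_{l+r-1}/x_{l+n-1}`. -/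
noncomputable def Xgcv (r : ℕ) (l : ℤ) : ℕ → CyclicField r
  | 0 => 1
  | n + 1 =>
      xv r (l + n + 1) / xv r l
        + ∑ k ∈ Finset.Icc 1 n,
            (xv r (l + n + 1) * xv r (l + r - 1)) / (xv r (l + k - 1) * xv r (l + k))
        + xv r (l + r - 1) / xv r (l + n)

/-!
The variables `x_s` are the lambda lengths of the arcs joining the vertices `s` of an infinite
polygon, whose sides all have lambda length `1`, to a common ideal apex.  The lambda length of the
diagonal from `a` to `b` is then `x_a x_b` times the length `∑ 1 / (x_s x_{s+1})` of the segment
which the two arcs cut out of the horocycle at the apex.  By periodicity of the `x_s`, `X(l, n)` is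
the lambda length of the diagonal from `l - 1` to `l + n`, or of any translate of it by a multiple
of `r`.  Since horocycle lengths are additive, lambda lengths satisfy Ptolemy's relation, and the
multiplication formula is this relation for the quadrilateral with vertices
`j - 1 < (m + 1) r + i - 1 < m r + l + j < (m + 1) r + i + k`.
-/

theorem sum_Ico_add_sum_Ico {α M : Type*} [LinearOrder α] [LocallyFiniteOrder α] [AddCommMonoid M]
    (f : α → M) {a b c : α} (hab : a ≤ b) (hbc : b ≤ c) :
    ∑ s ∈ Finset.Ico a b, f s + ∑ s ∈ Finset.Ico b c, f s = ∑ s ∈ Finset.Ico a c, f s := by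
  rw [← Finset.sum_union (Finset.Ico_disjoint_Ico_consecutive a b c),
    Finset.Ico_union_Ico_eq_Ico hab hbc]

theorem sum_Icc_one_eq_sum_Ico_int {M : Type*} [AddCommMonoid M] (f : ℤ → M) (l : ℤ) (n : ℕ) :
    ∑ k ∈ Finset.Icc 1 n, f (l + k - 1) = ∑ s ∈ Finset.Ico l (l + n), f s := by
  induction n with
  | zero => simp
  | succ n ih =>
    rw [Finset.sum_Icc_succ_top (by lia), ih, Nat.cast_succ, ← add_assoc, add_sub_cancel_right,
      Finset.sum_Ico_add_eq_sum_Ico_add_one (by lia)]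

section LambdaLength

variable {K : Type*} [Semifield K] (x : ℤ → K)

/-- Penner's lambda length of the diagonal `[a, b]` of a polygon with vertices indexed by `ℤ` and
all sides `[s, s + 1]` of lambda length `1`, in terms of the lambda lengths `x s` of the arcs
joining the vertices `s` to a common apex.  It is meant for `a ≤ b`, and is `0` for `b ≤ a`. -/
noncomputable def lambdaLength (a b : ℤ) : K :=
  x a * x b * ∑ s ∈ Finset.Ico a b, 1 / (x s * x (s + 1))

theorem lambdaLength_ptolemy {a b c d : ℤ} (hab : a ≤ b) (hbc : b ≤ c) (hcd : c ≤ d) :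
    lambdaLength x b d * lambdaLength x a c =
      lambdaLength x a d * lambdaLength x b c + lambdaLength x a b * lambdaLength x c d := by
  simp only [lambdaLength, ← sum_Ico_add_sum_Ico _ hab (hbc.trans hcd),
    ← sum_Ico_add_sum_Ico _ hab hbc, ← sum_Ico_add_sum_Ico _ hbc hcd]
  ring

variable {x}

theorem lambdaLength_add_period {p : ℤ} (hp : Function.Periodic x p) (a b : ℤ) :
    lambdaLength x (a + p) (b + p) = lambdaLength x a b := by
  simp only [lambdaLength, hp _, ← Finset.sum_Ico_add', add_right_comm _ p 1]

theorem lambdaLength_self_add_one {a : ℤ} (ha : x a ≠ 0) (ha' : x (a + 1) ≠ 0) :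
    lambdaLength x a (a + 1) = 1 := by
  rw [lambdaLength, ← Finset.sum_Ico_add_eq_sum_Ico_add_one le_rfl, Finset.Ico_self,
    Finset.sum_empty, zero_add, mul_one_div_cancel (mul_ne_zero ha ha')]

theorem lambdaLength_eq_sum_Icc (hx : ∀ s, x s ≠ 0) (l : ℤ) (n : ℕ) :
    lambdaLength x (l - 1) (l + n + 1) =
      x (l + n + 1) / x l
        + ∑ k ∈ Finset.Icc 1 n, x (l + n + 1) * x (l - 1) / (x (l + k - 1) * x (l + k))
        + x (l - 1) / x (l + n) := by
  have first_term : ∑ s ∈ Finset.Ico (l - 1) l, 1 / (x s * x (s + 1)) = 1 / (x (l - 1) * x l) := by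
    simpa using (Finset.sum_Ico_add_eq_sum_Ico_add_one (le_refl (l - 1))
      fun s ↦ 1 / (x s * x (s + 1))).symm
  have middle_terms : ∑ s ∈ Finset.Ico l (l + n), 1 / (x s * x (s + 1)) =
      ∑ k ∈ Finset.Icc 1 n, 1 / (x (l + k - 1) * x (l + k)) := by
    simpa using (sum_Icc_one_eq_sum_Ico_int (fun s ↦ 1 / (x s * x (s + 1))) l n).symm
  have factored : ∑ k ∈ Finset.Icc 1 n, x (l + n + 1) * x (l - 1) / (x (l + k - 1) * x (l + k)) =
      x (l - 1) * x (l + n + 1) * ∑ k ∈ Finset.Icc 1 n, 1 / (x (l + k - 1) * x (l + k)) := by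
    simp only [Finset.mul_sum, mul_one_div, mul_comm (x (l - 1))]
  rw [lambdaLength, ← Finset.sum_Ico_add_eq_sum_Ico_add_one (by lia),
    ← sum_Ico_add_sum_Ico _ (sub_one_lt l).le (by lia), first_term,
    middle_terms, factored]
  field_simp [hx]

end LambdaLength

theorem xv_ne_zero (r : ℕ) (i : ℤ) : xv r i ≠ 0 := by
  simp [xv]

theorem xv_periodic (r : ℕ) : Function.Periodic (xv r) r := fun i ↦ by
  simp [xv]

theorem Xgcv_eq_lambdaLength (r : ℕ) (l : ℤ) (n : ℕ) :
    Xgcv r l n = lambdaLength (xv r) (l - 1) (l + n) := by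
  cases n with
  | zero =>
    simpa [Xgcv] using
      (lambdaLength_self_add_one (xv_ne_zero r (l - 1)) (xv_ne_zero r _)).symm
  | succ n =>
    have hperiod : xv r (l + r - 1) = xv r (l - 1) := by
      rw [add_sub_right_comm, xv_periodic]
    rw [Xgcv, hperiod, Nat.cast_succ, ← add_assoc, lambdaLength_eq_sum_Icc (xv_ne_zero r)]

theorem Xgcv_toNat_eq_lambdaLength (r : ℕ) {l n a b : ℤ} (q : ℤ) (hn : 0 ≤ n)
    (ha : a = l - 1 + q * r) (hb : b = l + n + q * r) :
    Xgcv r l n.toNat = lambdaLength (xv r) a b := by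
  rw [Xgcv_eq_lambdaLength, Int.toNat_of_nonneg hn, ha, hb,
    lambdaLength_add_period (by simpa only [smul_eq_mul] using (xv_periodic r).zsmul q)]

theorem stmt6_general (r : ℕ) (i j k l m : ℤ) (hji : j ≤ (m + 1) * r + i - 1)
    (hlj1 : i ≤ l + j - r) (hlj2 : l + j - r ≤ k + i - 1) :
    Xgcv r i k.toNat * Xgcv r j (m * r + l).toNat =
      Xgcv r j ((m + 1) * r + k + i - j).toNat * Xgcv r i (l + j - r - i).toNat
        + Xgcv r j ((m + 1) * r + i - j - 1).toNat
            * Xgcv r (l + j + 1) (k + r + i - l - j - 1).toNat := by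
  obtain ⟨a, ha⟩ : ∃ a, a = j - 1 := ⟨_, rfl⟩
  obtain ⟨b, hb⟩ : ∃ b, b = (m + 1) * r + i - 1 := ⟨_, rfl⟩
  obtain ⟨c, hc⟩ : ∃ c, c = m * r + l + j := ⟨_, rfl⟩
  obtain ⟨d, hd⟩ : ∃ d, d = (m + 1) * r + i + k := ⟨_, rfl⟩
  rw [Xgcv_toNat_eq_lambdaLength r (a := b) (b := d) (m + 1),
    Xgcv_toNat_eq_lambdaLength r (a := a) (b := c) 0,
    Xgcv_toNat_eq_lambdaLength r (a := a) (b := d) 0,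
    Xgcv_toNat_eq_lambdaLength r (a := b) (b := c) (m + 1),
    Xgcv_toNat_eq_lambdaLength r (a := a) (b := b) 0,
    Xgcv_toNat_eq_lambdaLength r (a := c) (b := d) m]
  · exact lambdaLength_ptolemy (xv r) (by linarith) (by linarith) (by linarith)
  all_goals linarith

/-- inductive multiplication formula, case `i < j`, `k < j - i`,
`i ≤ l + j - r ≤ k + i - 1`. -/
theorem stmt6 (r : ℕ) (hr : 1 ≤ r) (i j k l m : ℤ)
    (hi : 1 ≤ i) (hij : i < j) (hj : j ≤ r)
    (hl0 : 0 ≤ l) (hl : l ≤ (r : ℤ) - 1) (hm : 0 ≤ m)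
    (hk1 : 1 ≤ k) (hk2 : k ≤ m * r + l)
    (hk : k < j - i) (hlj1 : i ≤ l + j - r) (hlj2 : l + j - r ≤ k + i - 1) :
    Xgcv r i k.toNat * Xgcv r j (m * r + l).toNat =
      Xgcv r j ((m + 1) * r + k + i - j).toNat * Xgcv r i (l + j - r - i).toNat
        + Xgcv r j ((m + 1) * r + i - j - 1).toNat
            * Xgcv r (l + j + 1) (k + r + i - l - j - 1).toNat :=
  stmt6_general r i j k l m (by linarith [mul_nonneg hm (Int.natCast_nonneg r)]) hlj1 hlj2
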